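/- Let σ0 > 0 and β ∈ (0,1). Let G be the cumulative distribution function of the centered Gaussian of variance 3σ0², and for B ∈ ℕ set T(B) := σ0·√(6β(log 2)B) and the B-bit thresholds t_k := G^{−1}((k−1)·2^{−B}) for 2 ≤ k ≤ 2^B. Then there exist constants c₁, c₂ > 0 and B₀ ∈ ℕ such that for all B ≥ B₀, c₁·B^{−1/2}·2^{(1−β)B} ≤ #{ k ∈ {2,…,2^B} : t_k ≥ T(B) } ≤ c₂·B^{−1/2}·2^{(1−β)B}. Equivalently, the number of quantization bins lying entirely outside [−T(B), T(B)] is Θ(B^{−1/2}·2^{(1−β)B}). -/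

import Mathlib

/-!
Let `Q` be the mass that the Gaussian of variance `s² = 3σ0²` gives to `(T(B), ∞)`. Since `G` is
strictly increasing, `t_k ≥ T(B)` holds exactly when `2 ^ B - (k - 1) ≤ 2 ^ B * Q`, so the number
of such `k` is `⌊2 ^ B * Q⌋` (`card_filter_tail`). The Mills-ratio bounds
`tail_le` and `le_tail` show that `Q` is of order `γ(T(B)) / T(B)`, where `γ` is the density; the
threshold `T(B)` is chosen so that `exp (-T(B)² / (2s²)) = 2 ^ (-βB)`, while `T(B)` is a constant
times `B ^ (1/2)`. Hence `2 ^ B * Q` is of order `B ^ (-1/2) * 2 ^ ((1 - β)B)`. This tends to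
infinity, so taking the integer part costs at most a factor `2`.
-/

open Finset MeasureTheory Filter

/-- Centered Gaussian pdf of standard deviation σ. -/
noncomputable def gaussPdf (σ t : ℝ) : ℝ :=
  (2 * Real.pi * σ ^ 2) ^ (-(1:ℝ) / 2) * Real.exp (-(t ^ 2) / (2 * σ ^ 2))

/-- The optimal compressor associated with γ_{0,σ0}: the cumulative distribution
function of the centered Gaussian of variance 3σ0². -/
noncomputable def compressorG (σ0 lam : ℝ) : ℝ :=
  ∫ t in Set.Iic lam, gaussPdf (Real.sqrt 3 * σ0) t

/-- The transition value T(B) = σ0·√(6β(log 2)B). -/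
noncomputable def transitionT (σ0 β : ℝ) (B : ℕ) : ℝ :=
  σ0 * Real.sqrt (6 * β * Real.log 2 * (B : ℝ))

open scoped Topology

lemma gaussPdf_pos {s : ℝ} (hs : 0 < s) (x : ℝ) : 0 < gaussPdf s x := by
  unfold gaussPdf
  have := Real.pi_pos
  positivity

lemma gaussPdf_eq {s : ℝ} (hs : 0 < s) :
    gaussPdf s = ProbabilityTheory.gaussianPDFReal 0 ⟨s ^ 2, sq_nonneg s⟩ := by
  funext x
  have h : 0 ≤ 2 * Real.pi * s ^ 2 := by have := Real.pi_pos; positivity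
  simp only [gaussPdf, ProbabilityTheory.gaussianPDFReal, sub_zero]
  rw [neg_div, Real.rpow_neg h, ← Real.sqrt_eq_rpow]
  rfl

lemma integrable_gaussPdf {s : ℝ} (hs : 0 < s) : Integrable (gaussPdf s) := by
  rw [gaussPdf_eq hs]
  exact ProbabilityTheory.integrable_gaussianPDFReal _ _

lemma integral_gaussPdf {s : ℝ} (hs : 0 < s) : ∫ x, gaussPdf s x = 1 := by
  rw [gaussPdf_eq hs]
  refine ProbabilityTheory.integral_gaussianPDFReal_eq_one 0 fun h => ?_
  have : s ^ 2 = 0 := congrArg NNReal.toReal h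
  exact (pow_pos hs 2).ne' this

lemma strictMono_integral_gaussPdf {s : ℝ} (hs : 0 < s) :
    StrictMono fun x => ∫ t in Set.Iic x, gaussPdf s t := by
  intro a b hab
  have hi := integrable_gaussPdf hs
  have h := intervalIntegral.integral_Iic_sub_Iic (a := a) (b := b) hi.integrableOn hi.integrableOn
  have hpos : 0 < ∫ t in a..b, gaussPdf s t :=
    intervalIntegral.intervalIntegral_pos_of_pos hi.intervalIntegrable (gaussPdf_pos hs) hab
  simp only
  linarith

lemma integral_Iic_eq_one_sub {s : ℝ} (hs : 0 < s) (x : ℝ) :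
    ∫ t in Set.Iic x, gaussPdf s t = 1 - ∫ t in Set.Ioi x, gaussPdf s t := by
  have hi := integrable_gaussPdf hs
  have := intervalIntegral.integral_Iic_add_Ioi (b := x) hi.integrableOn hi.integrableOn
  rw [integral_gaussPdf hs] at this
  linarith

lemma tail_lt_one {s : ℝ} (hs : 0 < s) (x : ℝ) : ∫ t in Set.Ioi x, gaussPdf s t < 1 := by
  have h1 := strictMono_integral_gaussPdf hs (sub_one_lt x)
  have h2 : 0 ≤ ∫ t in Set.Iic (x - 1), gaussPdf s t :=
    integral_nonneg fun t => (gaussPdf_pos hs t).le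
  simp only at h1
  rw [integral_Iic_eq_one_sub hs x] at h1
  linarith

/-- Upper Mills bound: on `(T, ∞)` the density is at most `t / T` times itself, and
`t * gaussPdf s t` has the explicit primitive `-s ^ 2 * gaussPdf s t`. -/
lemma tail_le {s T : ℝ} (hs : 0 < s) (hT : 0 < T) :
    ∫ t in Set.Ioi T, gaussPdf s t ≤ s ^ 2 / T * gaussPdf s T := by
  set f : ℝ → ℝ := fun t => -(s ^ 2 / T * gaussPdf s t) with hf
  have hd : ∀ x, HasDerivAt f (x / T * gaussPdf s x) x := by
    intro x
    have h1 : HasDerivAt (fun t : ℝ => -(t ^ 2) / (2 * s ^ 2)) (-(2 * x) / (2 * s ^ 2)) x := by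
      simpa using ((hasDerivAt_pow 2 x).neg.div_const (2 * s ^ 2))
    have h2 := (((h1.exp.const_mul ((2 * Real.pi * s ^ 2) ^ (-(1:ℝ) / 2))).const_mul
      (s ^ 2 / T)).neg)
    refine h2.congr_deriv ?_
    unfold gaussPdf
    field_simp
  have hlim : Tendsto f atTop (𝓝 0) := by
    have h1 : Tendsto (fun t : ℝ => -(t ^ 2) / (2 * s ^ 2)) atTop atBot := by
      have : Tendsto (fun t : ℝ => t ^ 2 / (2 * s ^ 2)) atTop atTop :=
        (tendsto_pow_atTop two_ne_zero).atTop_div_const (by positivity)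
      simpa only [neg_div, Function.comp_def] using tendsto_neg_atTop_atBot.comp this
    have h2 := (((Real.tendsto_exp_atBot.comp h1).const_mul
      ((2 * Real.pi * s ^ 2) ^ (-(1:ℝ) / 2))).const_mul (s ^ 2 / T)).neg
    simpa [hf, gaussPdf, Function.comp_def] using h2
  have hnn : ∀ x ∈ Set.Ioi T, 0 ≤ x / T * gaussPdf s x := fun x hx =>
    mul_nonneg (div_nonneg (hT.le.trans (le_of_lt hx)) hT.le) (gaussPdf_pos hs x).le
  have hint := integrableOn_Ioi_deriv_of_nonneg' (fun x _ => hd x) hnn hlim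
  have hval := integral_Ioi_of_hasDerivAt_of_nonneg' (fun x _ => hd x) hnn hlim
  calc ∫ t in Set.Ioi T, gaussPdf s t ≤ ∫ t in Set.Ioi T, t / T * gaussPdf s t := by
        refine setIntegral_mono_on (integrable_gaussPdf hs).integrableOn hint measurableSet_Ioi ?_
        intro x hx
        exact le_mul_of_one_le_left (gaussPdf_pos hs x).le ((one_le_div hT).2 (le_of_lt hx))
    _ = s ^ 2 / T * gaussPdf s T := by rw [hval]; simp [hf]

/-- Lower Mills bound: on `(T, T + 1 / T]` one has `t ^ 2 ≤ T ^ 2 + 3`, so the density stays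
comparable to its value at `T`. -/
lemma le_tail {s T : ℝ} (hs : 0 < s) (hT : 1 ≤ T) :
    Real.exp (-3 / (2 * s ^ 2)) / T * gaussPdf s T ≤ ∫ t in Set.Ioi T, gaussPdf s t := by
  have hT0 : 0 < T := by linarith
  have hi := integrable_gaussPdf hs
  have hlow : ∀ x ∈ Set.Ioc T (T + 1 / T),
      Real.exp (-3 / (2 * s ^ 2)) * gaussPdf s T ≤ gaussPdf s x := by
    intro x hx
    have hx2 : x ^ 2 ≤ T ^ 2 + 3 := by
      have h1 : 1 / T ≤ 1 := (div_le_one hT0).2 hT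
      have h2 : T * (1 / T) = 1 := by field_simp
      have h3 : 0 ≤ 1 / T := by positivity
      have h4 : x ^ 2 ≤ (T + 1 / T) ^ 2 := pow_le_pow_left₀ (hT0.le.trans hx.1.le) hx.2 2
      nlinarith
    unfold gaussPdf
    rw [mul_left_comm, ← Real.exp_add, ← add_div]
    have := Real.pi_pos
    gcongr
    linarith
  calc Real.exp (-3 / (2 * s ^ 2)) / T * gaussPdf s T
      = ∫ _ in Set.Ioc T (T + 1 / T), Real.exp (-3 / (2 * s ^ 2)) * gaussPdf s T := by
        have : 0 ≤ T⁻¹ := by positivity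
        simp [this]
        field_simp
    _ ≤ ∫ t in Set.Ioc T (T + 1 / T), gaussPdf s t :=
        setIntegral_mono_on (integrableOn_const (by simp)) hi.integrableOn
          measurableSet_Ioc hlow
    _ ≤ ∫ t in Set.Ioi T, gaussPdf s t :=
        setIntegral_mono_set hi.integrableOn (ae_of_all _ fun t => (gaussPdf_pos hs t).le)
          (ae_of_all _ fun _ hx => Set.Ioc_subset_Ioi_self hx)

/-- With `m = N + 1 - k`, the condition `(k - 1) / N ≥ 1 - q` reads `m ≤ N * q`; as `q < 1` the
bound `m ≤ N - 1` is automatic, so all of `1, …, ⌊N * q⌋` occur. -/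
lemma card_filter_tail (N : ℕ) (q : ℝ) (hq0 : 0 ≤ q) (hq1 : q < 1) (hN : 0 < N) (P : ℕ → Prop)
    [DecidablePred P]
    (hP : ∀ k, 2 ≤ k → k ≤ N → (P k ↔ 1 - q ≤ ((k : ℝ) - 1) * (N : ℝ)⁻¹)) :
    ((Finset.Icc 2 N).filter P).card = ⌊(N : ℝ) * q⌋₊ := by
  have hN' : (0 : ℝ) < N := by exact_mod_cast hN
  have hnq : 0 ≤ (N : ℝ) * q := by positivity
  have hfl : ⌊(N : ℝ) * q⌋₊ < N := by
    rw [Nat.floor_lt hnq]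
    nlinarith
  have key : ∀ k, 2 ≤ k → k ≤ N → (P k ↔ N + 1 - k ≤ ⌊(N : ℝ) * q⌋₊) := by
    intro k h2 hk
    rw [hP k h2 hk, Nat.le_floor_iff hnq, ← div_eq_mul_inv, le_div_iff₀ hN',
      Nat.cast_sub (by omega)]
    push_cast
    constructor <;> intro h <;> linarith
  have h : (Finset.Icc 2 N).filter P = Finset.Icc (N + 1 - ⌊(N : ℝ) * q⌋₊) N := by
    ext k
    simp only [Finset.mem_filter, Finset.mem_Icc]
    constructor
    · rintro ⟨⟨h2, hk⟩, hp⟩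
      have := (key k h2 hk).1 hp
      omega
    · rintro ⟨h1, h2⟩
      exact ⟨⟨by omega, h2⟩, (key k (by omega) h2).2 (by omega)⟩
  rw [h, Nat.card_Icc]
  omega

lemma tendsto_rpow_neg_half_mul {δ : ℝ} (hδ : 0 < δ) :
    Tendsto (fun B : ℕ => (B : ℝ) ^ (-(1:ℝ) / 2) * 2 ^ (δ * (B : ℝ))) atTop atTop := by
  have hb : 0 < Real.log 2 * δ := mul_pos (Real.log_pos one_lt_two) hδ
  refine ((tendsto_exp_mul_div_rpow_atTop (1 / 2) _ hb).comp
    tendsto_natCast_atTop_atTop).congr fun B => ?_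
  rw [Function.comp_apply, Real.rpow_def_of_pos (two_pos : (0:ℝ) < 2), neg_div,
    Real.rpow_neg (Nat.cast_nonneg B), div_eq_inv_mul, mul_assoc]

theorem count_bins_outside_transition
    (σ0 β : ℝ) (hσ0 : 0 < σ0) (hβ : β ∈ Set.Ioo (0:ℝ) 1)
    (t : ℕ → ℕ → ℝ)
    (ht : ∀ B k : ℕ, 2 ≤ k → k ≤ 2 ^ B →
      compressorG σ0 (t B k) = ((k : ℝ) - 1) * 2 ^ (-(B : ℝ))) :
    ∃ c₁ c₂ : ℝ, 0 < c₁ ∧ 0 < c₂ ∧ ∃ B₀ : ℕ, ∀ B : ℕ, B₀ ≤ B →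
      c₁ * (B : ℝ) ^ (-(1:ℝ) / 2) * 2 ^ ((1 - β) * (B : ℝ)) ≤
          (((Finset.Icc 2 (2 ^ B)).filter fun k => transitionT σ0 β B ≤ t B k).card : ℝ) ∧
      (((Finset.Icc 2 (2 ^ B)).filter fun k => transitionT σ0 β B ≤ t B k).card : ℝ) ≤
          c₂ * (B : ℝ) ^ (-(1:ℝ) / 2) * 2 ^ ((1 - β) * (B : ℝ)) := by
  obtain ⟨hβ0, hβ1⟩ := hβ
  have hlog : 0 < Real.log 2 := Real.log_pos one_lt_two
  have hpi := Real.pi_pos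
  obtain ⟨s, hs_def⟩ : ∃ s, s = Real.sqrt 3 * σ0 := ⟨_, rfl⟩
  have hs : 0 < s := by rw [hs_def]; positivity
  have hs2 : s ^ 2 = 3 * σ0 ^ 2 := by
    rw [hs_def, mul_pow, Real.sq_sqrt (by norm_num)]
  obtain ⟨K, hK⟩ : ∃ K, K = (2 * Real.pi * s ^ 2) ^ (-(1:ℝ) / 2) := ⟨_, rfl⟩
  have hK0 : 0 < K := by rw [hK]; positivity
  -- `T(B) = a * √B`
  obtain ⟨a, ha⟩ : ∃ a, a = σ0 * Real.sqrt (6 * β * Real.log 2) := ⟨_, rfl⟩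
  have ha0 : 0 < a := by rw [ha]; positivity
  have hTa : ∀ B : ℕ, transitionT σ0 β B = a * Real.sqrt B := by
    intro B
    rw [transitionT, ha, Real.sqrt_mul (by positivity)]
    ring
  have hpdf : ∀ B : ℕ, gaussPdf s (transitionT σ0 β B) = K * 2 ^ (-β * (B : ℝ)) := by
    intro B
    rw [gaussPdf, ← hK, hs2, transitionT, mul_pow, Real.sq_sqrt (by positivity),
      Real.rpow_def_of_pos two_pos]
    congr 2
    field_simp
    ring
  obtain ⟨E, hE⟩ : ∃ E, E = Real.exp (-3 / (2 * s ^ 2)) := ⟨_, rfl⟩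
  have hE0 : 0 < E := by rw [hE]; positivity
  have hlim := (tendsto_rpow_neg_half_mul (sub_pos.2 hβ1)).const_mul_atTop
    (show 0 < E * K / (2 * a) by positivity)
  have hTlim : Tendsto (fun B : ℕ => a * Real.sqrt B) atTop atTop :=
    (Real.tendsto_sqrt_atTop.comp tendsto_natCast_atTop_atTop).const_mul_atTop ha0
  obtain ⟨B₀, hB₀⟩ := eventually_atTop.1
    ((hlim.eventually_ge_atTop 1).and (hTlim.eventually_ge_atTop 1))
  refine ⟨E * K / (2 * a), s ^ 2 * K / a, by positivity, by positivity, B₀, fun B hB => ?_⟩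
  obtain ⟨hbig, hT1⟩ := hB₀ B hB
  rw [← hTa] at hT1
  have hT0 : 0 < transitionT σ0 β B := by linarith
  have htail_lo := le_tail hs hT1
  have htail_hi := tail_le hs hT0
  have hq1 := tail_lt_one hs (transitionT σ0 β B)
  have hq0 : 0 ≤ ∫ x in Set.Ioi (transitionT σ0 β B), gaussPdf s x :=
    integral_nonneg fun x => (gaussPdf_pos hs x).le
  have hG := integral_Iic_eq_one_sub hs (transitionT σ0 β B)
  set q := ∫ x in Set.Ioi (transitionT σ0 β B), gaussPdf s x with hq
  have hcard := card_filter_tail (2 ^ B) q hq0 hq1 (by positivity)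
    (fun k => transitionT σ0 β B ≤ t B k) (by
      intro k h2 hk
      have h := ht B k h2 hk
      rw [Real.rpow_neg zero_le_two, Real.rpow_natCast] at h
      push_cast
      rw [← h, ← hG, compressorG, ← hs_def]
      exact (strictMono_integral_gaussPdf hs).le_iff_le.symm)
  rw [hcard]
  push_cast
  -- `2 ^ B * γ(T) / T` in closed form, up to the constant `C`
  have hscale : ∀ C : ℝ, (2:ℝ) ^ B * (C / transitionT σ0 β B * (K * 2 ^ (-β * (B : ℝ)))) =
      C * K / a * ((B : ℝ) ^ (-(1:ℝ) / 2) * 2 ^ ((1 - β) * (B : ℝ))) := by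
    intro C
    rw [hTa, neg_div, Real.rpow_neg (Nat.cast_nonneg B), ← Real.sqrt_eq_rpow,
      show (1 - β) * (B : ℝ) = B + -β * B by ring, Real.rpow_add two_pos, Real.rpow_natCast]
    rw [← div_div]
    ring
  have h2B : (0 : ℝ) < 2 ^ B := by positivity
  rw [hpdf, ← hE] at htail_lo
  rw [hpdf] at htail_hi
  have hlo := mul_le_mul_of_nonneg_left htail_lo h2B.le
  have hhi := mul_le_mul_of_nonneg_left htail_hi h2B.le
  rw [hscale] at hlo hhi
  have hhalf : E * K / a = 2 * (E * K / (2 * a)) := by field_simp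
  rw [hhalf] at hlo
  rw [mul_assoc, mul_assoc]
  constructor
  · have := Nat.lt_floor_add_one ((2:ℝ) ^ B * q)
    linarith
  · exact (Nat.floor_le (by positivity)).trans hhi
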